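/- Let μ > 0, l > 0, c > 1, set T = 2(l² + 1)/(l³·√μ), and let f : ℝⁿ → ℝ be a continuously differentiable μ-strongly convex function with global minimizer x*; write f* = f(x*). Let x : [T/c, T] → ℝⁿ be a twice differentiable solution of ẍ(t) + (4(l² + 1)/(l²·t))·ẋ(t) + ∇f(x(t)) = 0, and define g(t) = f(x(t)) − f* + (1/2)·‖ẋ(t) + l√μ·(x(t) − x*)‖². Then g(T) ≤ ( 2(c−1)·l² + 1 )·e^{(−1 + 1/c)·2(l² + 1)/l²}·g(T/c). -/

import Mathlib

open scoped RealInnerProductSpace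

/-!
Write `z = x - x*`, `m = l√μ` and `E = f(x) - f* + ½‖ẋ + m z‖²`. The friction coefficient is
`2mT/t`, and adding `m²(T/t - 1)‖z‖²` to `E` cancels all the cross terms `⟪z, ẋ⟫` in the
derivative of `V = e^{mt} (E + m²(T/t - 1)‖z‖²)`. The choice `m³T = 2(m² + μ)` turns the remaining
coefficient of `‖z‖²` into `-m²T(1/t - m/2)²`, so `V` is nonincreasing.
The added term vanishes at `t = T`, and at the starting time it is controlled by `E` through
quadratic growth of `f`: along a ray from `x*`, the slope of `f - f*` is nonnegative and, by the
strong convexity inequality, grows at rate at least `μ/2` times the squared speed.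
-/

open Set

section QuasiStrongConvexity

variable {E : Type*} [NormedAddCommGroup E] [InnerProductSpace ℝ E] [CompleteSpace E]
  {f : E → ℝ} {xstar : E} {μ : ℝ}

/-- Quasi-strong convexity of `f` with modulus `μ` about `xstar`: the first-order inequality of
`μ`-strong convexity, required only for comparison with the value at `xstar`. -/
def QuasiStrongConvexAt (μ : ℝ) (f : E → ℝ) (xstar : E) : Prop :=
  ∀ y, f y + ⟪gradient f y, xstar - y⟫ + μ / 2 * ‖xstar - y‖ ^ 2 ≤ f xstar

lemma hasDerivWithinAt_comp_gradient {γ : ℝ → E} {γ' : E} {s : Set ℝ} {t : ℝ}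
    (hf : DifferentiableAt ℝ f (γ t)) (hγ : HasDerivWithinAt γ γ' s t) :
    HasDerivWithinAt (fun r => f (γ r)) ⟪gradient f (γ t), γ'⟫ s t :=
  (hf.hasGradientAt.hasFDerivAt.comp_hasDerivWithinAt t hγ).congr_deriv (by simp)

namespace QuasiStrongConvexAt

lemma sub_le_inner (h : QuasiStrongConvexAt μ f xstar) (y : E) :
    f y - f xstar ≤ ⟪gradient f y, y - xstar⟫ - μ / 2 * ‖y - xstar‖ ^ 2 := by
  have hy := h y
  rw [← neg_sub y xstar, inner_neg_right, norm_neg] at hy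
  linarith

lemma monotoneOn_slope_sub_linear (h : QuasiStrongConvexAt μ f xstar) (hf : Differentiable ℝ f)
    (d : E) :
    MonotoneOn (fun s : ℝ => (f (xstar + s • d) - f xstar) / s - μ / 2 * ‖d‖ ^ 2 * s)
      (Ioi 0) := by
  have hderiv : ∀ s ∈ Ioi (0 : ℝ), HasDerivWithinAt
      (fun s : ℝ => (f (xstar + s • d) - f xstar) / s - μ / 2 * ‖d‖ ^ 2 * s)
      ((⟪gradient f (xstar + s • d), d⟫ * s - (f (xstar + s • d) - f xstar)) / s ^ 2
        - μ / 2 * ‖d‖ ^ 2) (Ioi 0) s := by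
    intro s hs
    have hline : HasDerivWithinAt (fun s : ℝ => xstar + s • d) d (Ioi 0) s := by
      simpa using ((hasDerivWithinAt_id s (Ioi 0)).smul_const d).const_add xstar
    have hφ := (hasDerivWithinAt_comp_gradient (hf _) hline).sub_const (f xstar)
    have hid := hasDerivWithinAt_id s (Ioi (0 : ℝ))
    exact ((hφ.div hid (ne_of_gt hs)).sub (hid.const_mul _)).congr_deriv (by simp)
  refine monotoneOn_of_hasDerivWithinAt_nonneg (convex_Ioi 0)
    (fun s hs => (hderiv s hs).continuousWithinAt)
    (fun s hs => (hderiv s (interior_subset hs)).mono interior_subset) fun s hs => ?_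
  have hs : 0 < s := interior_subset hs
  have hsub := h.sub_le_inner (xstar + s • d)
  rw [add_sub_cancel_left, real_inner_smul_right, norm_smul, mul_pow, Real.norm_eq_abs,
    sq_abs] at hsub
  rw [sub_nonneg, le_div_iff₀ (by positivity)]
  linarith

lemma quadratic_growth (h : QuasiStrongConvexAt μ f xstar) (hf : Differentiable ℝ f)
    (hmin : ∀ y, f xstar ≤ f y) (y : E) :
    μ / 2 * ‖y - xstar‖ ^ 2 ≤ f y - f xstar := by
  have hslope : ∀ s ∈ Ioo (0 : ℝ) 1,
      μ / 2 * ‖y - xstar‖ ^ 2 * (1 - s) ≤ f y - f xstar := by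
    intro s hs
    have hmono := h.monotoneOn_slope_sub_linear hf (y - xstar) (mem_Ioi.2 hs.1)
      (mem_Ioi.2 one_pos) hs.2.le
    have hnonneg : 0 ≤ (f (xstar + s • (y - xstar)) - f xstar) / s :=
      div_nonneg (sub_nonneg.2 (hmin _)) hs.1.le
    simp only [one_smul, add_sub_cancel, div_one, mul_one] at hmono
    linarith
  have hlim : Filter.Tendsto (fun s : ℝ => μ / 2 * ‖y - xstar‖ ^ 2 * (1 - s))
      (nhdsWithin 0 (Ioi 0)) (nhds (μ / 2 * ‖y - xstar‖ ^ 2)) := by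
    have hcont : Continuous fun s : ℝ => μ / 2 * ‖y - xstar‖ ^ 2 * (1 - s) := by fun_prop
    simpa using (hcont.tendsto 0).mono_left nhdsWithin_le_nhds
  exact le_of_tendsto hlim
    (Filter.eventually_of_mem (Ioo_mem_nhdsGT one_pos) hslope)

end QuasiStrongConvexAt

end QuasiStrongConvexity

section Dissipation

variable {E : Type*} [NormedAddCommGroup E] [InnerProductSpace ℝ E]
  {m μ T t F : ℝ} {z v a p : E}

lemma lyapunov_rate_eq (hmT : m ^ 3 * T = 2 * (m ^ 2 + μ))
    (hode : a + (2 * m * T / t) • v + p = 0) :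
    m * (F + 1 / 2 * ‖v + m • z‖ ^ 2 + m ^ 2 * (T / t - 1) * ‖z‖ ^ 2)
        + (⟪p, v⟫ + ⟪v + m • z, a + m • v⟫
          + (m ^ 2 * (-T / t ^ 2) * ‖z‖ ^ 2 + m ^ 2 * (T / t - 1) * (2 * ⟪z, v⟫)))
      = -(m * (2 * (T / t - 1) + 1 / 2) * ‖v‖ ^ 2 + m ^ 2 * T * (1 / t - m / 2) ^ 2 * ‖z‖ ^ 2
          + m * (⟪p, z⟫ - μ / 2 * ‖z‖ ^ 2 - F)) := by
  have ha : a = -((2 * m * T / t) • v) - p := by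
    rw [eq_sub_iff_add_eq, eq_neg_iff_add_eq_zero, ← hode]; abel
  have hnorm : ‖v + m • z‖ ^ 2 = ‖v‖ ^ 2 + 2 * m * ⟪z, v⟫ + m ^ 2 * ‖z‖ ^ 2 := by
    rw [norm_add_sq_real, norm_smul, real_inner_smul_right, real_inner_comm, mul_pow,
      Real.norm_eq_abs, sq_abs]
    ring
  have hinner : ⟪v + m • z, a + m • v⟫ = (m - 2 * m * T / t) * ‖v‖ ^ 2 - ⟪p, v⟫
      + m * (m - 2 * m * T / t) * ⟪z, v⟫ - m * ⟪p, z⟫ := by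
    simp only [ha, inner_add_left, inner_add_right, inner_sub_right, inner_neg_right,
      real_inner_smul_left, real_inner_smul_right, real_inner_self_eq_norm_sq,
      real_inner_comm p v, real_inner_comm p z]
    ring
  rw [hnorm, hinner]
  linear_combination m / 4 * ‖z‖ ^ 2 * hmT

lemma lyapunov_rate_nonpos (hm : 0 ≤ m) (ht : 0 < t) (htT : t ≤ T)
    (hmT : m ^ 3 * T = 2 * (m ^ 2 + μ)) (hode : a + (2 * m * T / t) • v + p = 0)
    (hF : F ≤ ⟪p, z⟫ - μ / 2 * ‖z‖ ^ 2) :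
    m * (F + 1 / 2 * ‖v + m • z‖ ^ 2 + m ^ 2 * (T / t - 1) * ‖z‖ ^ 2)
        + (⟪p, v⟫ + ⟪v + m • z, a + m • v⟫
          + (m ^ 2 * (-T / t ^ 2) * ‖z‖ ^ 2 + m ^ 2 * (T / t - 1) * (2 * ⟪z, v⟫))) ≤ 0 := by
  have hT : 0 < T := ht.trans_le htT
  have hratio : 0 ≤ T / t - 1 := sub_nonneg.2 ((one_le_div ht).2 htT)
  have hgap : 0 ≤ ⟪p, z⟫ - μ / 2 * ‖z‖ ^ 2 - F := sub_nonneg.2 hF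
  rw [lyapunov_rate_eq hmT hode, neg_nonpos]
  exact add_nonneg (by positivity) (mul_nonneg hm hgap)

end Dissipation

section Flow

variable {E : Type*} [NormedAddCommGroup E] [InnerProductSpace ℝ E] [CompleteSpace E]

/-- The damped flow behind Nesterov's accelerated gradient method: `x` solves
`ẍ + (r / t) ẋ + ∇f(x) = 0` on `s`, with velocity `v` and acceleration `a`;
derivatives are taken within `s`, so they are one-sided at the endpoints of an interval. -/
structure IsNagFlowOn (f : E → ℝ) (r : ℝ) (s : Set ℝ) (x v a : ℝ → E) : Prop where
  hasDerivWithinAt_pos : ∀ t ∈ s, HasDerivWithinAt x (v t) s t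
  hasDerivWithinAt_vel : ∀ t ∈ s, HasDerivWithinAt v (a t) s t
  ode : ∀ t ∈ s, a t + (r / t) • v t + gradient f (x t) = 0

/-- The energy `g` of the phase point with position `q` and velocity `w`, where `m` stands for
`l√μ`. -/
noncomputable def nagEnergy (f : E → ℝ) (xstar : E) (m : ℝ) (q w : E) : ℝ :=
  f q - f xstar + 1 / 2 * ‖w + m • (q - xstar)‖ ^ 2

/-- The time-dependent Lyapunov function of the flow with friction `2mT / t`. It reduces to
`exp (m * T) * nagEnergy` at the final time `t = T`. -/
noncomputable def nagLyapunov (f : E → ℝ) (xstar : E) (m T t : ℝ) (q w : E) : ℝ :=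
  Real.exp (m * t) * (nagEnergy f xstar m q w + m ^ 2 * (T / t - 1) * ‖q - xstar‖ ^ 2)

variable {f : E → ℝ} {xstar : E} {μ m T : ℝ} {s : Set ℝ} {x v a : ℝ → E}

lemma hasDerivWithinAt_nagEnergy {v' a' : E} {t : ℝ} (hf : DifferentiableAt ℝ f (x t))
    (hx : HasDerivWithinAt x v' s t) (hv : HasDerivWithinAt v a' s t) :
    HasDerivWithinAt (fun t => nagEnergy f xstar m (x t) (v t))
      (⟪gradient f (x t), v'⟫ + ⟪v t + m • (x t - xstar), a' + m • v'⟫) s t := by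
  have hpot := (hasDerivWithinAt_comp_gradient hf hx).sub_const (f xstar)
  have hkin := (hv.add ((hx.sub_const xstar).const_smul m)).norm_sq.const_mul (1 / 2 : ℝ)
  refine (hpot.add hkin).congr_deriv ?_
  simp only [Pi.add_apply, Pi.smul_apply]
  ring

lemma hasDerivWithinAt_nagLyapunov {v' a' : E} {t : ℝ} (ht : t ≠ 0)
    (hf : DifferentiableAt ℝ f (x t))
    (hx : HasDerivWithinAt x v' s t) (hv : HasDerivWithinAt v a' s t) :
    HasDerivWithinAt (fun t => nagLyapunov f xstar m T t (x t) (v t))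
      (Real.exp (m * t) *
        (m * (nagEnergy f xstar m (x t) (v t) + m ^ 2 * (T / t - 1) * ‖x t - xstar‖ ^ 2)
          + (⟪gradient f (x t), v'⟫ + ⟪v t + m • (x t - xstar), a' + m • v'⟫
            + (m ^ 2 * (-T / t ^ 2) * ‖x t - xstar‖ ^ 2
              + m ^ 2 * (T / t - 1) * (2 * ⟪x t - xstar, v'⟫))))) s t := by
  have hexp : HasDerivWithinAt (fun t : ℝ => Real.exp (m * t)) (Real.exp (m * t) * m) s t := by
    simpa using ((hasDerivAt_id t).const_mul m).exp.hasDerivWithinAt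
  have hcoeff : HasDerivWithinAt (fun t : ℝ => m ^ 2 * (T / t - 1)) (m ^ 2 * (-T / t ^ 2)) s t := by
    simpa [div_eq_mul_inv] using
      (((hasDerivAt_inv ht).const_mul T).sub_const 1).const_mul (m ^ 2) |>.hasDerivWithinAt
  have henergy := hasDerivWithinAt_nagEnergy (xstar := xstar) (m := m) hf hx hv
  have hcorr := hcoeff.mul (hx.sub_const xstar).norm_sq
  refine (hexp.mul (henergy.add hcorr)).congr_deriv ?_
  simp only [Pi.add_apply, Pi.mul_apply]
  ring

namespace IsNagFlowOn

lemma antitoneOn_nagLyapunov (h : IsNagFlowOn f (2 * m * T) s x v a) (hs : Convex ℝ s)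
    (hsT : s ⊆ Ioc 0 T) (hm : 0 ≤ m) (hmT : m ^ 3 * T = 2 * (m ^ 2 + μ))
    (hf : Differentiable ℝ f) (hqsc : QuasiStrongConvexAt μ f xstar) :
    AntitoneOn (fun t => nagLyapunov f xstar m T t (x t) (v t)) s := by
  have hderiv := fun t (ht : t ∈ s) => hasDerivWithinAt_nagLyapunov (xstar := xstar) (m := m)
    (T := T) (hsT ht).1.ne' (hf (x t)) (h.hasDerivWithinAt_pos t ht) (h.hasDerivWithinAt_vel t ht)
  refine antitoneOn_of_hasDerivWithinAt_nonpos hs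
    (fun t ht => (hderiv t ht).continuousWithinAt)
    (fun t ht => (hderiv t (interior_subset ht)).mono interior_subset) fun t ht => ?_
  have hts := interior_subset ht
  exact mul_nonpos_of_nonneg_of_nonpos (Real.exp_pos _).le
    (lyapunov_rate_nonpos hm (hsT hts).1 (hsT hts).2 hmT (h.ode t hts) (hqsc.sub_le_inner (x t)))

end IsNagFlowOn

lemma nagEnergy_add_le (hμ : 0 < μ) {k : ℝ} (hk : 0 ≤ k) (hf : Differentiable ℝ f)
    (hmin : ∀ y, f xstar ≤ f y) (hqsc : QuasiStrongConvexAt μ f xstar) (q w : E) :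
    nagEnergy f xstar m q w + k * ‖q - xstar‖ ^ 2
      ≤ (2 * k / μ + 1) * nagEnergy f xstar m q w := by
  have hgrowth : μ / 2 * ‖q - xstar‖ ^ 2 ≤ nagEnergy f xstar m q w :=
    (hqsc.quadratic_growth hf hmin q).trans (le_add_of_nonneg_right (by positivity))
  calc nagEnergy f xstar m q w + k * ‖q - xstar‖ ^ 2
      = 2 * k / μ * (μ / 2 * ‖q - xstar‖ ^ 2) + nagEnergy f xstar m q w := by field_simp; ring
    _ ≤ 2 * k / μ * nagEnergy f xstar m q w + nagEnergy f xstar m q w := by gcongr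
    _ = (2 * k / μ + 1) * nagEnergy f xstar m q w := by ring

lemma IsNagFlowOn.nagEnergy_le {t₀ : ℝ} (h : IsNagFlowOn f (2 * m * T) (Icc t₀ T) x v a)
    (ht₀ : 0 < t₀) (htT : t₀ ≤ T) (hμ : 0 < μ) (hm : 0 ≤ m)
    (hmT : m ^ 3 * T = 2 * (m ^ 2 + μ)) (hf : Differentiable ℝ f) (hmin : ∀ y, f xstar ≤ f y)
    (hqsc : QuasiStrongConvexAt μ f xstar) :
    nagEnergy f xstar m (x T) (v T)
      ≤ (2 * (m ^ 2 * (T / t₀ - 1)) / μ + 1) * Real.exp (m * t₀ - m * T) *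
          nagEnergy f xstar m (x t₀) (v t₀) := by
  have hanti : nagLyapunov f xstar m T T (x T) (v T) ≤ nagLyapunov f xstar m T t₀ (x t₀) (v t₀) :=
    h.antitoneOn_nagLyapunov (convex_Icc t₀ T) (fun t ht => ⟨ht₀.trans_le ht.1, ht.2⟩) hm hmT hf
      hqsc (left_mem_Icc.2 htT) (right_mem_Icc.2 htT) htT
  have hfinal : nagLyapunov f xstar m T T (x T) (v T)
      = Real.exp (m * T) * nagEnergy f xstar m (x T) (v T) := by
    simp [nagLyapunov, div_self (ht₀.trans_le htT).ne']
  have hratio : 0 ≤ T / t₀ - 1 := sub_nonneg.2 ((one_le_div ht₀).2 htT)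
  have hinit : nagLyapunov f xstar m T t₀ (x t₀) (v t₀) ≤ Real.exp (m * t₀) *
      ((2 * (m ^ 2 * (T / t₀ - 1)) / μ + 1) * nagEnergy f xstar m (x t₀) (v t₀)) :=
    mul_le_mul_of_nonneg_left
      (nagEnergy_add_le hμ (by positivity) hf hmin hqsc (x t₀) (v t₀)) (Real.exp_pos _).le
  refine le_of_mul_le_mul_left ?_ (Real.exp_pos (m * T))
  calc Real.exp (m * T) * nagEnergy f xstar m (x T) (v T)
      ≤ Real.exp (m * t₀) *
          ((2 * (m ^ 2 * (T / t₀ - 1)) / μ + 1) * nagEnergy f xstar m (x t₀) (v t₀)) :=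
        hfinal.symm.trans_le (hanti.trans hinit)
    _ = _ := by rw [Real.exp_sub]; field_simp

theorem nag_flow_restart_one_round_general {l c : ℝ} (hμ : 0 < μ) (hl : 0 < l) (hc : 1 ≤ c)
    (hT : T = 2 * (l ^ 2 + 1) / (l ^ 3 * Real.sqrt μ)) (hf : Differentiable ℝ f)
    (hmin : ∀ y, f xstar ≤ f y) (hqsc : QuasiStrongConvexAt μ f xstar)
    (h : IsNagFlowOn f (4 * (l ^ 2 + 1) / l ^ 2) (Icc (T / c) T) x v a) :
    nagEnergy f xstar (l * Real.sqrt μ) (x T) (v T)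
      ≤ (2 * (c - 1) * l ^ 2 + 1) * Real.exp ((-1 + 1 / c) * (2 * (l ^ 2 + 1) / l ^ 2)) *
          nagEnergy f xstar (l * Real.sqrt μ) (x (T / c)) (v (T / c)) := by
  have hc0 : 0 < c := one_pos.trans_le hc
  have hT0 : 0 < T := by rw [hT]; positivity
  have hmsq : (l * Real.sqrt μ) ^ 2 = l ^ 2 * μ := by rw [mul_pow, Real.sq_sqrt hμ.le]
  have hmT : l * Real.sqrt μ * T = 2 * (l ^ 2 + 1) / l ^ 2 := by rw [hT]; field_simp
  have hcubic : (l * Real.sqrt μ) ^ 3 * T = 2 * ((l * Real.sqrt μ) ^ 2 + μ) := by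
    rw [pow_succ, mul_assoc, hmT, hmsq]; field_simp
  have hfriction : 4 * (l ^ 2 + 1) / l ^ 2 = 2 * (l * Real.sqrt μ) * T := by
    rw [mul_assoc, hmT]; ring
  have hgain : 2 * ((l * Real.sqrt μ) ^ 2 * (T / (T / c) - 1)) / μ = 2 * (c - 1) * l ^ 2 := by
    rw [hmsq, div_div_cancel₀ hT0.ne']; field_simp
  have hexponent : l * Real.sqrt μ * (T / c) - l * Real.sqrt μ * T
      = (-1 + 1 / c) * (2 * (l ^ 2 + 1) / l ^ 2) := by
    rw [← hmT]; ring
  have hdecay := (hfriction ▸ h).nagEnergy_le (div_pos hT0 hc0) (div_le_self hT0.le hc) hμ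
    (by positivity) hcubic hf hmin hqsc
  rwa [hgain, hexponent] at hdecay

end Flow

/-- One round of the restart scheme: for `μ > 0`, `l > 0`, `c > 1`,
`T = 2(l² + 1)/(l³√μ)`, a `μ`-strongly convex `f` with minimizer `x*`, and a twice
differentiable solution on `[T/c, T]` of `ẍ(t) + (4(l² + 1)/(l²t))·ẋ(t) + ∇f(x(t)) = 0`,
setting `g(t) = f(x(t)) − f* + (1/2)‖ẋ(t) + l√μ(x(t) − x*)‖²`, one has
`g(T) ≤ (2(c−1)l² + 1)·e^{(−1 + 1/c)·2(l² + 1)/l²}·g(T/c)`. -/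
theorem nag_flow_restart_one_round {n : ℕ}
    (μ l c T : ℝ) (hμ : 0 < μ) (hl : 0 < l) (hc : 1 < c)
    (hT : T = 2 * (l ^ 2 + 1) / (l ^ 3 * Real.sqrt μ))
    (f : EuclideanSpace ℝ (Fin n) → ℝ)
    (xstar : EuclideanSpace ℝ (Fin n))
    (hf : ContDiff ℝ 1 f)
    (hmin : ∀ y, f xstar ≤ f y)
    (hsc : ∀ y z : EuclideanSpace ℝ (Fin n),
      f z ≥ f y + ⟪gradient f y, z - y⟫ + μ / 2 * ‖z - y‖ ^ 2)
    (x v a : ℝ → EuclideanSpace ℝ (Fin n))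
    (hx : ∀ t ∈ Set.Icc (T / c) T, HasDerivWithinAt x (v t) (Set.Icc (T / c) T) t)
    (hv : ∀ t ∈ Set.Icc (T / c) T, HasDerivWithinAt v (a t) (Set.Icc (T / c) T) t)
    (hode : ∀ t ∈ Set.Icc (T / c) T,
      a t + (4 * (l ^ 2 + 1) / (l ^ 2 * t)) • v t + gradient f (x t) = 0) :
    f (x T) - f xstar
        + 1 / 2 * ‖v T + (l * Real.sqrt μ) • (x T - xstar)‖ ^ 2
      ≤ (2 * (c - 1) * l ^ 2 + 1) * Real.exp ((-1 + 1 / c) * (2 * (l ^ 2 + 1) / l ^ 2)) *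
          (f (x (T / c)) - f xstar
            + 1 / 2 * ‖v (T / c) + (l * Real.sqrt μ) • (x (T / c) - xstar)‖ ^ 2) := by
  exact nag_flow_restart_one_round_general hμ hl hc.le hT (hf.differentiable one_ne_zero) hmin
    (fun y => hsc y xstar) ⟨hx, hv, fun t ht => by rw [div_div, hode t ht]⟩
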